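/- arXiv:2308.13865 — 2 statements merged into one kernel-verified Lean document; each statement's English description precedes it below -/
import Mathlib

section
/- Let s ∈ ℝ. There exists a constant C = C(φ) > 0 such that liminf_{n→∞} ‖g_n ∂_x f_n‖_{H^s(ℝ)} ≥ C, where f_n(x) = 2^{-ns} φ(x) sin((17/12)·2^n x) and g_n(x) = 2^{-n} φ(x). -/
open MeasureTheory Filter

/-- Fourier transform with convention `f̂(ξ) = ∫ f(x) e^{-i x ξ} dx`. -/
noncomputable def fourierT (f : ℝ → ℂ) (ξ : ℝ) : ℂ :=
  ∫ x : ℝ, f x * Complex.exp (-(Complex.I * x * ξ))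

/-- The `H^s(ℝ)` norm, `‖f‖_{H^s}² = ∫ (1+|ξ|²)^s |f̂(ξ)|² dξ`. -/
noncomputable def sobolevNorm (s : ℝ) (f : ℝ → ℂ) : ℝ :=
  Real.sqrt (∫ ξ : ℝ, (1 + ξ ^ 2) ^ s * ‖fourierT f ξ‖ ^ 2)

/-- Membership in `H^s(ℝ)` (for integrable representatives). -/
def MemSobolev (s : ℝ) (f : ℝ → ℂ) : Prop :=
  MeasureTheory.Integrable f ∧
    MeasureTheory.Integrable (fun ξ : ℝ => (1 + ξ ^ 2) ^ s * ‖fourierT f ξ‖ ^ 2)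

/-- The high-frequency functions `f_n(x) = 2^{-ns} φ(x) sin((17/12)·2^n x)`. -/
noncomputable def fn (s : ℝ) (φ : ℝ → ℂ) (n : ℕ) : ℝ → ℂ :=
  fun x => (((2 : ℝ) ^ (-(n : ℝ) * s) * Real.sin (17 / 12 * 2 ^ n * x) : ℝ) : ℂ) * φ x

/-- The low-frequency functions `g_n(x) = 2^{-n} φ(x)`. -/
noncomputable def gn (φ : ℝ → ℂ) (n : ℕ) : ℝ → ℂ :=
  fun x => (((2 : ℝ) ^ (-(n : ℝ)) : ℝ) : ℂ) * φ x

/-- `φ̂` is an even, real-valued, nonnegative function in `C_c^∞(ℝ)` with `φ̂ = 1` on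
`{|ξ| ≤ 1/4}` and `φ̂ = 0` on `{|ξ| ≥ 1/2}`, and `φ` is the (continuous, integrable)
function on `ℝ` whose Fourier transform is `φ̂`. -/
structure CutoffPair (φhat : ℝ → ℝ) (φ : ℝ → ℂ) : Prop where
  smooth : ContDiff ℝ (⊤ : ℕ∞) φhat
  compactSupport : HasCompactSupport φhat
  even : ∀ ξ : ℝ, φhat (-ξ) = φhat ξ
  nonneg : ∀ ξ : ℝ, 0 ≤ φhat ξ
  eq_one : ∀ ξ : ℝ, |ξ| ≤ 1 / 4 → φhat ξ = 1
  eq_zero : ∀ ξ : ℝ, 1 / 2 ≤ |ξ| → φhat ξ = 0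
  continuous : Continuous φ
  integrable : MeasureTheory.Integrable φ
  fourier_eq : ∀ ξ : ℝ, fourierT φ ξ = (φhat ξ : ℂ)

open scoped FourierTransform SchwartzMap

theorem fourierT_eq (f : ℝ → ℂ) (w : ℝ) : fourierT f (2 * Real.pi * w) = 𝓕 f w := by
  rw [Real.fourier_eq', fourierT]
  refine integral_congr_ae (Eventually.of_forall fun x => ?_)
  simp only [RCLike.inner_apply, conj_trivial, smul_eq_mul]
  rw [mul_comm]
  congr 2
  push_cast
  ring

theorem fourierT_eq' (f : ℝ → ℂ) (w : ℝ) : fourierT f w = 𝓕 f (w / (2 * Real.pi)) := by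
  rw [← fourierT_eq]
  congr 1
  field_simp

theorem fourierT_continuous {f : ℝ → ℂ} (hf : Integrable f) : Continuous (fourierT f) := by
  have h : Continuous (𝓕 f) :=
    VectorFourier.fourierIntegral_continuous Real.continuous_fourierChar
      (by exact continuous_inner) hf
  have h2 : fourierT f = fun w => 𝓕 f (w / (2 * Real.pi)) := funext (fourierT_eq' f)
  rw [h2]
  exact h.comp (by fun_prop)

theorem norm_fourierT_le (f : ℝ → ℂ) (ξ : ℝ) : ‖fourierT f ξ‖ ≤ ∫ x, ‖f x‖ := by
  refine (norm_integral_le_integral_norm _).trans (le_of_eq ?_)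
  congr 1
  ext x
  rw [norm_mul, Complex.norm_exp]
  simp

theorem fourierT_deriv {f : ℝ → ℂ} (hf : Integrable f) (h'f : Differentiable ℝ f)
    (hf' : Integrable (deriv f)) (ξ : ℝ) :
    fourierT (deriv f) ξ = Complex.I * ξ * fourierT f ξ := by
  rw [fourierT_eq', fourierT_eq', Real.fourier_deriv hf h'f hf']
  simp only [smul_eq_mul]
  congr 1
  push_cast
  field_simp

theorem exists_schwartz {φhat : ℝ → ℝ} {φ : ℝ → ℂ} (hφ : CutoffPair φhat φ) :
    ∃ Φ : 𝓢(ℝ, ℂ), (∀ x, Φ x = φ x) ∧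
      (∀ x, φ x = ∫ w : ℝ, (φhat (2 * Real.pi * w) : ℂ) *
        Complex.exp (Complex.I * x * (2 * Real.pi * w : ℝ))) ∧
      Integrable (fun w : ℝ => (φhat (2 * Real.pi * w) : ℂ)) := by
  have hF : 𝓕 φ = fun w : ℝ => (φhat (2 * Real.pi * w) : ℂ) := by
    ext w
    rw [← fourierT_eq, hφ.fourier_eq]
  have hs : ContDiff ℝ (⊤ : ℕ∞) (fun w : ℝ => (φhat (2 * Real.pi * w) : ℂ)) :=
    Complex.ofRealCLM.contDiff.comp (hφ.smooth.comp (by fun_prop))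
  have hc : HasCompactSupport (fun w : ℝ => (φhat (2 * Real.pi * w) : ℂ)) := by
    refine HasCompactSupport.intro (isCompact_Icc (a := (-1 : ℝ)) (b := 1)) ?_
    intro w hw
    have : 1 < |w| := by
      by_contra h
      exact hw (Set.mem_Icc.2 (abs_le.1 (not_lt.1 h)))
    have h2 : (1 : ℝ) / 2 ≤ |2 * Real.pi * w| := by
      rw [abs_mul, abs_of_pos (by positivity)]
      nlinarith [Real.pi_gt_three]
    simp [hφ.eq_zero _ h2]
  have hi : Integrable (fun w : ℝ => (φhat (2 * Real.pi * w) : ℂ)) :=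
    hs.continuous.integrable_of_hasCompactSupport hc
  have hinv : 𝓕⁻ (𝓕 φ) = φ := hφ.continuous.fourierInv_fourier_eq hφ.integrable (hF ▸ hi)
  rw [hF] at hinv
  refine ⟨𝓕⁻ (hc.toSchwartzMap hs), ?_, ?_, hi⟩
  · intro x
    rw [SchwartzMap.fourierInv_coe]
    exact congrFun hinv x
  · intro x
    conv_lhs => rw [← hinv]
    rw [Real.fourierInv_eq']
    refine integral_congr_ae (Eventually.of_forall fun w => ?_)
    simp only [RCLike.inner_apply, conj_trivial, smul_eq_mul]
    rw [mul_comm]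
    congr 2
    push_cast
    ring

theorem fourierT_sq {φhat : ℝ → ℝ} {φ : ℝ → ℂ} (hφ : CutoffPair φhat φ) (ξ : ℝ) :
    fourierT (fun x => φ x * φ x) ξ =
      ((∫ w : ℝ, φhat (2 * Real.pi * w) * φhat (ξ - 2 * Real.pi * w) : ℝ) : ℂ) := by
  obtain ⟨Φ, hΦ, hinv, hi⟩ := exists_schwartz hφ
  have e1 : fourierT (fun x => φ x * φ x) ξ = ∫ x : ℝ, ∫ w : ℝ,
      (Complex.exp (Complex.I * x * (2 * Real.pi * w - ξ : ℝ))) *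
        (φ x * (φhat (2 * Real.pi * w) : ℂ)) := by
    unfold fourierT
    congr 1
    ext x
    have e2 : φ x * φ x * Complex.exp (-(Complex.I * x * ξ)) =
        (φ x * Complex.exp (-(Complex.I * x * ξ))) *
        ∫ w : ℝ, (φhat (2 * Real.pi * w) : ℂ) *
        Complex.exp (Complex.I * x * (2 * Real.pi * w : ℝ)) := by
      rw [← hinv x]
      ring
    rw [e2, ← integral_const_mul]
    refine integral_congr_ae (Eventually.of_forall fun w => ?_)
    simp only
    have : Complex.exp (Complex.I * x * (2 * Real.pi * w - ξ : ℝ)) =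
      Complex.exp (-(Complex.I * x * ξ)) * Complex.exp (Complex.I * x * (2 * Real.pi * w : ℝ)) := by
      rw [← Complex.exp_add]
      congr 1
      push_cast
      ring
    rw [this]
    ring
  rw [e1, integral_integral_swap]
  · rw [← integral_complex_ofReal]
    refine integral_congr_ae (Eventually.of_forall fun w => ?_)
    simp only
    push_cast
    rw [← hφ.fourier_eq (ξ - 2 * Real.pi * w), fourierT, ← integral_const_mul]
    refine integral_congr_ae (Eventually.of_forall fun x => ?_)
    simp only
    have : Complex.exp (Complex.I * x * (2 * Real.pi * w - ξ)) =
      Complex.exp (-(Complex.I * x * (ξ - 2 * Real.pi * w : ℝ))) := by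
      congr 1
      push_cast
      ring
    rw [this]
    ring
  · refine (Integrable.mul_prod hφ.integrable hi).bdd_mul (c := 1) ?_ ?_
    · apply Continuous.aestronglyMeasurable
      fun_prop
    · refine Eventually.of_forall fun p => ?_
      rw [Complex.norm_exp]
      simp

theorem fourierT_sq_zero {φhat : ℝ → ℝ} {φ : ℝ → ℂ} (hφ : CutoffPair φhat φ) (ξ : ℝ)
    (h : 1 ≤ |ξ|) : fourierT (fun x => φ x * φ x) ξ = 0 := by
  rw [fourierT_sq hφ]
  have : (fun w : ℝ => φhat (2 * Real.pi * w) * φhat (ξ - 2 * Real.pi * w)) = fun _ => 0 := by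
    ext w
    rcases le_total (1 / 2) |2 * Real.pi * w| with h1 | h1
    · rw [hφ.eq_zero _ h1, zero_mul]
    · rw [hφ.eq_zero (ξ - 2 * Real.pi * w), mul_zero]
      have := abs_sub_abs_le_abs_sub ξ (2 * Real.pi * w)
      linarith
  rw [this]
  simp

theorem fourierT_sq_lower {φhat : ℝ → ℝ} {φ : ℝ → ℂ} (hφ : CutoffPair φhat φ) (ξ : ℝ)
    (h : |ξ| ≤ 1 / 8) : 1 / 32 ≤ ‖fourierT (fun x => φ x * φ x) ξ‖ := by
  obtain ⟨Φ, hΦ, hinv, hi⟩ := exists_schwartz hφ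
  rw [fourierT_sq hφ, Complex.norm_real]
  refine le_trans ?_ (le_abs_self _)
  have hc := hφ.smooth.continuous
  have hcs : HasCompactSupport (fun w : ℝ => φhat (2 * Real.pi * w)) := by
    have := hφ.compactSupport.comp_homeomorph
      (Homeomorph.mulLeft₀ (2 * Real.pi) (by positivity))
    exact this
  have hint : Integrable (fun w : ℝ => φhat (2 * Real.pi * w) * φhat (ξ - 2 * Real.pi * w)) := by
    apply Continuous.integrable_of_hasCompactSupport (by fun_prop)
    exact hcs.mul_right
  calc (1 / 32 : ℝ) = ∫ w in Set.Icc (-(1 / 64) : ℝ) (1 / 64), (1 : ℝ) := by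
        simp
        norm_num
    _ ≤ ∫ w in Set.Icc (-(1 / 64) : ℝ) (1 / 64),
          φhat (2 * Real.pi * w) * φhat (ξ - 2 * Real.pi * w) := by
        refine setIntegral_mono_on (by simp) hint.integrableOn measurableSet_Icc ?_
        intro w hw
        have hw' : |w| ≤ 1 / 64 := abs_le.2 hw
        have h2 : |2 * Real.pi * w| ≤ 1 / 8 := by
          rw [abs_mul, abs_of_pos (by positivity)]
          have := Real.pi_le_four
          nlinarith [abs_nonneg w]
        have h3 := abs_sub ξ (2 * Real.pi * w)
        rw [hφ.eq_one _ (by linarith), hφ.eq_one _ (by linarith), one_mul]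
    _ ≤ _ := setIntegral_le_integral hint (Eventually.of_forall fun w =>
        mul_nonneg (hφ.nonneg _) (hφ.nonneg _))

theorem cutoff_facts {φhat : ℝ → ℝ} {φ : ℝ → ℂ} (hφ : CutoffPair φhat φ) :
    Differentiable ℝ φ ∧ Integrable (fun x => φ x * φ x) ∧
      Integrable (fun x => φ x * deriv φ x) := by
  obtain ⟨Φ, hΦ, -, -⟩ := exists_schwartz hφ
  have hf : (Φ : ℝ → ℂ) = φ := funext hΦ
  have hd : Differentiable ℝ φ := hf ▸ Φ.differentiable
  have hb : ∃ c, ∀ x, ‖φ x‖ ≤ c := by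
    refine ⟨SchwartzMap.seminorm ℝ 0 0 Φ, fun x => ?_⟩
    rw [← hΦ]
    exact SchwartzMap.norm_le_seminorm ℝ Φ x
  obtain ⟨c, hc⟩ := hb
  have hdi : Integrable (deriv φ) := by
    have := (SchwartzMap.derivCLM ℝ ℂ Φ).integrable (μ := volume)
    rw [← hf]
    exact this
  exact ⟨hd, hφ.integrable.bdd_mul hφ.continuous.aestronglyMeasurable (Eventually.of_forall hc),
    hdi.bdd_mul hφ.continuous.aestronglyMeasurable (Eventually.of_forall hc)⟩

theorem integrable_mul_exp {f : ℝ → ℂ} (hf : Integrable f) (ξ : ℝ) :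
    Integrable (fun x : ℝ => f x * Complex.exp (-(Complex.I * x * ξ))) := by
  refine hf.mul_bdd (c := 1) ?_ ?_
  · apply Continuous.aestronglyMeasurable
    fun_prop
  · refine Eventually.of_forall fun p => ?_
    rw [Complex.norm_exp]
    simp

theorem fourierT_main (s : ℝ) {φhat : ℝ → ℝ} {φ : ℝ → ℂ} (hφ : CutoffPair φhat φ) (n : ℕ)
    (L : ℝ) (hL : L = 17 / 12 * 2 ^ n) (ξ : ℝ) :
    fourierT (fun x => gn φ n x * deriv (fn s φ n) x) ξ =
      (((2 : ℝ) ^ (-(n : ℝ)) * (2 : ℝ) ^ (-(n : ℝ) * s) / 4 : ℝ) : ℂ) *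
        (((ξ + L : ℝ) : ℂ) * fourierT (fun x => φ x * φ x) (ξ - L) +
          ((L - ξ : ℝ) : ℂ) * fourierT (fun x => φ x * φ x) (ξ + L)) := by
  obtain ⟨hd, h1, h2⟩ := cutoff_facts hφ
  have hder : deriv (fun x => φ x * φ x) = fun x => 2 * (φ x * deriv φ x) := by
    ext x
    rw [((hd x).hasDerivAt.fun_mul (hd x).hasDerivAt).deriv]
    ring
  have h3 : Integrable (deriv (fun x => φ x * φ x)) := by
    rw [hder]
    exact h2.const_mul 2
  have hF := fourierT_deriv h1 (hd.mul hd) h3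
  generalize hA : (2 : ℝ) ^ (-(n : ℝ)) = A
  generalize hB : (2 : ℝ) ^ (-(n : ℝ) * s) = B
  have hfn : ∀ x, deriv (fn s φ n) x = B * (L * Complex.cos (L * x) * φ x +
      Complex.sin (L * x) * deriv φ x) := by
    intro x
    have e : fn s φ n = fun x : ℝ => ((B * Real.sin (L * x) : ℝ) : ℂ) * φ x := by
      ext y
      simp only [fn, hB, hL]
    have d1 : HasDerivAt (fun x : ℝ => B * Real.sin (L * x)) (B * (Real.cos (L * x) * L)) x := by
      have := ((hasDerivAt_id x).const_mul L).sin.const_mul B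
      simpa using this
    rw [e, (d1.ofReal_comp.fun_mul (hd x).hasDerivAt).deriv]
    push_cast
    ring
  set ψ := fun x => φ x * φ x with hψ
  have hpt : ∀ x : ℝ, gn φ n x * deriv (fn s φ n) x * Complex.exp (-(Complex.I * x * ξ)) =
      (A * B * L / 2 : ℂ) * (ψ x * Complex.exp (-(Complex.I * x * (ξ - L : ℝ)))) +
      (A * B * L / 2 : ℂ) * (ψ x * Complex.exp (-(Complex.I * x * (ξ + L : ℝ)))) +
      ((-(A * B * Complex.I / 4) : ℂ) *
        (deriv ψ x * Complex.exp (-(Complex.I * x * (ξ - L : ℝ)))) +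
      (A * B * Complex.I / 4 : ℂ) *
        (deriv ψ x * Complex.exp (-(Complex.I * x * (ξ + L : ℝ))))) := by
    intro x
    have x1 : Complex.exp (-(Complex.I * x * (ξ - L : ℝ))) =
        Complex.exp (L * x * Complex.I) * Complex.exp (-(Complex.I * x * ξ)) := by
      rw [← Complex.exp_add]
      congr 1
      push_cast
      ring
    have x2 : Complex.exp (-(Complex.I * x * (ξ + L : ℝ))) =
        Complex.exp (-(L * x) * Complex.I) * Complex.exp (-(Complex.I * x * ξ)) := by
      rw [← Complex.exp_add]
      congr 1
      push_cast
      ring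
    rw [x1, x2, hfn, hder, gn, hA, Complex.cos, Complex.sin, hψ]
    ring
  have i1 := integrable_mul_exp h1 (ξ - L)
  have i2 := integrable_mul_exp h1 (ξ + L)
  have i3 := integrable_mul_exp h3 (ξ - L)
  have i4 := integrable_mul_exp h3 (ξ + L)
  have key : fourierT (fun x => gn φ n x * deriv (fn s φ n) x) ξ =
      (A * B * L / 2 : ℂ) * fourierT ψ (ξ - L) + (A * B * L / 2 : ℂ) * fourierT ψ (ξ + L) +
      ((-(A * B * Complex.I / 4) : ℂ) * fourierT (deriv ψ) (ξ - L) +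
      (A * B * Complex.I / 4 : ℂ) * fourierT (deriv ψ) (ξ + L)) := by
    unfold fourierT
    rw [integral_congr_ae (Eventually.of_forall hpt)]
    rw [integral_add ((i1.const_mul _).fun_add (i2.const_mul _))
      ((i3.const_mul _).fun_add (i4.const_mul _)),
      integral_add (i1.const_mul _) (i2.const_mul _),
      integral_add (i3.const_mul _) (i4.const_mul _)]
    simp only [integral_const_mul]
  rw [key, hF, hF]
  push_cast
  linear_combination (-(A * B / 4 * (ξ - L) * fourierT ψ (ξ - L)) +
    A * B / 4 * (ξ + L) * fourierT ψ (ξ + L) : ℂ) * Complex.I_sq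

theorem rpow_bounds (s : ℝ) : ∃ m M : ℝ, 0 < m ∧ 0 < M ∧
    ∀ t : ℝ, 1 / 2 ≤ t → t ≤ 5 → m ≤ t ^ s ∧ t ^ s ≤ M := by
  rcases le_total 0 s with hs | hs
  · refine ⟨(1 / 2) ^ s, 5 ^ s, by positivity, by positivity, fun t h1 h2 => ⟨?_, ?_⟩⟩
    · exact Real.rpow_le_rpow (by norm_num) h1 hs
    · exact Real.rpow_le_rpow (by linarith) h2 hs
  · refine ⟨5 ^ s, (1 / 2) ^ s, by positivity, by positivity, fun t h1 h2 => ⟨?_, ?_⟩⟩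
    · exact Real.rpow_le_rpow_of_nonpos (by linarith) h2 hs
    · exact Real.rpow_le_rpow_of_nonpos (by norm_num) h1 hs

theorem core_bound (s : ℝ) (Ψ : ℝ → ℂ) (hc : Continuous Ψ) (hz : ∀ ξ : ℝ, 1 ≤ |ξ| → Ψ ξ = 0)
    (K : ℝ) (hK : ∀ ξ, ‖Ψ ξ‖ ≤ K) (hl : ∀ ξ : ℝ, |ξ| ≤ 1 / 8 → 1 / 32 ≤ ‖Ψ ξ‖) :
    ∃ c D : ℝ, 0 < c ∧ ∀ A L : ℝ, 0 < A → A ≤ 1 / 2 → A * L = 17 / 12 →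
      c ≤ ∫ ξ : ℝ, (1 + ξ ^ 2) ^ s * ‖((A * A ^ s / 4 : ℝ) : ℂ) *
        (((ξ + L : ℝ) : ℂ) * Ψ (ξ - L) + ((L - ξ : ℝ) : ℂ) * Ψ (ξ + L))‖ ^ 2 ∧
      ∫ ξ : ℝ, (1 + ξ ^ 2) ^ s * ‖((A * A ^ s / 4 : ℝ) : ℂ) *
        (((ξ + L : ℝ) : ℂ) * Ψ (ξ - L) + ((L - ξ : ℝ) : ℂ) * Ψ (ξ + L))‖ ^ 2 ≤ D := by
  obtain ⟨m, M, hm, hM, hmM⟩ := rpow_bounds s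
  have hK0 : 0 ≤ K := (norm_nonneg _).trans (hK 0)
  refine ⟨m * (1 / 16 * (2 * (1 / 32)) ^ 2) * (1 / 4), M * (1 / 16 * (7 * K) ^ 2) * 4,
    by positivity, ?_⟩
  intro A L hA hA2 hAL
  have hL : 17 / 6 ≤ L := by nlinarith
  have hG : ∀ ξ : ℝ, (1 + ξ ^ 2) ^ s * ‖((A * A ^ s / 4 : ℝ) : ℂ) *
        (((ξ + L : ℝ) : ℂ) * Ψ (ξ - L) + ((L - ξ : ℝ) : ℂ) * Ψ (ξ + L))‖ ^ 2 =
      (A ^ 2 + (A * ξ) ^ 2) ^ s * (1 / 16 *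
        (A * ‖(((ξ + L : ℝ) : ℂ) * Ψ (ξ - L) + ((L - ξ : ℝ) : ℂ) * Ψ (ξ + L))‖) ^ 2) := by
    intro ξ
    have e : (A ^ 2 + (A * ξ) ^ 2) ^ s = (1 + ξ ^ 2) ^ s * (A ^ s) ^ 2 := by
      have : A ^ 2 + (A * ξ) ^ 2 = (1 + ξ ^ 2) * (A * A) := by ring
      rw [this, Real.mul_rpow (by positivity) (by positivity), Real.mul_rpow hA.le hA.le]
      ring
    rw [e, norm_mul, Complex.norm_real, Real.norm_of_nonneg (by positivity)]
    ring
  have hcont : Continuous (fun ξ : ℝ => (1 + ξ ^ 2) ^ s * ‖((A * A ^ s / 4 : ℝ) : ℂ) *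
        (((ξ + L : ℝ) : ℂ) * Ψ (ξ - L) + ((L - ξ : ℝ) : ℂ) * Ψ (ξ + L))‖ ^ 2) := by
    refine Continuous.mul ?_ (by fun_prop)
    refine Continuous.rpow_const (by fun_prop) fun x => Or.inl (by positivity)
  simp only [hG] at hcont ⊢
  generalize hGd : (fun ξ : ℝ => (A ^ 2 + (A * ξ) ^ 2) ^ s * (1 / 16 *
        (A * ‖(((ξ + L : ℝ) : ℂ) * Ψ (ξ - L) + ((L - ξ : ℝ) : ℂ) * Ψ (ξ + L))‖) ^ 2)) = G
    at hcont ⊢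
  have hGx : ∀ ξ : ℝ, G ξ = (A ^ 2 + (A * ξ) ^ 2) ^ s * (1 / 16 *
        (A * ‖(((ξ + L : ℝ) : ℂ) * Ψ (ξ - L) + ((L - ξ : ℝ) : ℂ) * Ψ (ξ + L))‖) ^ 2) := by
    intro ξ
    rw [← hGd]
  have hG0 : ∀ ξ, 0 ≤ G ξ := by
    intro ξ
    rw [hGx]
    positivity
  set S : Set ℝ := Set.Icc (L - 1) (L + 1) ∪ Set.Icc (-L - 1) (-L + 1) with hS
  have hT : ∀ ξ ∈ S, A * |ξ| ≤ 23 / 12 ∧ m ≤ (A ^ 2 + (A * ξ) ^ 2) ^ s ∧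
      (A ^ 2 + (A * ξ) ^ 2) ^ s ≤ M := by
    intro ξ hξ
    have h1 : L - 1 ≤ |ξ| ∧ |ξ| ≤ L + 1 := by
      rcases hξ with h | h
      · rw [abs_of_nonneg (by linarith [h.1])]
        exact h
      · rw [abs_of_nonpos (by linarith [h.2])]
        exact ⟨by linarith [h.2], by linarith [h.1]⟩
    have h2 : A * |ξ| ≤ 23 / 12 := by nlinarith
    have h3 : 11 / 12 ≤ A * |ξ| := by nlinarith
    have h4 : (A * ξ) ^ 2 = (A * |ξ|) ^ 2 := by rw [mul_pow, mul_pow, sq_abs]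
    refine ⟨h2, ?_⟩
    rw [h4]
    exact hmM _ (by nlinarith) (by nlinarith)
  have hout : ∀ ξ, ξ ∉ S → G ξ = 0 := by
    intro ξ hξ
    have h1 : 1 ≤ |ξ - L| := by
      by_contra h
      obtain ⟨h1, h2⟩ := abs_lt.1 (not_le.1 h)
      exact hξ (Or.inl ⟨by linarith, by linarith⟩)
    have h2 : 1 ≤ |ξ + L| := by
      by_contra h
      obtain ⟨h1, h2⟩ := abs_lt.1 (not_le.1 h)
      exact hξ (Or.inr ⟨by linarith, by linarith⟩)
    rw [hGx, hz _ h1, hz _ h2]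
    simp
  have hup : ∀ ξ ∈ S, ‖G ξ‖ ≤ M * (1 / 16 * (7 * K) ^ 2) := by
    intro ξ hξ
    obtain ⟨h1, h2, h3⟩ := hT ξ hξ
    rw [Real.norm_of_nonneg (hG0 ξ), hGx]
    have h4 : A * ‖(((ξ + L : ℝ) : ℂ) * Ψ (ξ - L) + ((L - ξ : ℝ) : ℂ) * Ψ (ξ + L))‖ ≤ 7 * K := by
      have a1 : ‖(((ξ + L : ℝ) : ℂ) * Ψ (ξ - L) + ((L - ξ : ℝ) : ℂ) * Ψ (ξ + L))‖ ≤
          (|ξ| + L) * K + (|ξ| + L) * K := by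
        refine (norm_add_le _ _).trans ?_
        rw [norm_mul, norm_mul, Complex.norm_real, Complex.norm_real, Real.norm_eq_abs,
          Real.norm_eq_abs]
        have b1 : |ξ + L| ≤ |ξ| + L := by
          refine (abs_add_le _ _).trans ?_
          rw [abs_of_nonneg (by linarith : 0 ≤ L)]
        have b2 : |L - ξ| ≤ |ξ| + L := by
          refine (abs_sub _ _).trans ?_
          rw [abs_of_nonneg (by linarith : 0 ≤ L), add_comm]
        have b3 : 0 ≤ |ξ| + L := (abs_nonneg _).trans b1
        exact add_le_add (mul_le_mul b1 (hK _) (norm_nonneg _) b3)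
          (mul_le_mul b2 (hK _) (norm_nonneg _) b3)
      have a2 := mul_le_mul_of_nonneg_left a1 hA.le
      have a3 : A * ((|ξ| + L) * K + (|ξ| + L) * K) = 2 * (A * |ξ| + A * L) * K := by ring
      rw [a3, hAL] at a2
      refine a2.trans ?_
      exact mul_le_mul_of_nonneg_right (by linarith) hK0
    gcongr
  have hSc : IsCompact S := isCompact_Icc.union isCompact_Icc
  have hint : Integrable G :=
    hcont.integrable_of_hasCompactSupport (HasCompactSupport.intro hSc hout)
  constructor
  · calc m * (1 / 16 * (2 * (1 / 32)) ^ 2) * (1 / 4)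
        = ∫ ξ in Set.Icc (L - 1 / 8) (L + 1 / 8), m * (1 / 16 * (2 * (1 / 32)) ^ 2) := by
          rw [setIntegral_const, Real.volume_real_Icc_of_le (by linarith), smul_eq_mul]
          ring
      _ ≤ ∫ ξ in Set.Icc (L - 1 / 8) (L + 1 / 8), G ξ := by
          refine setIntegral_mono_on (integrableOn_const (by simp)) hint.integrableOn measurableSet_Icc ?_
          intro ξ hξ
          have hξS : ξ ∈ S := Or.inl ⟨by linarith [hξ.1], by linarith [hξ.2]⟩
          obtain ⟨h1, h2, h3⟩ := hT ξ hξS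
          have p1 : 1 ≤ |ξ + L| := le_trans (by linarith [hξ.1]) (le_abs_self _)
          have p2 := hl (ξ - L) (abs_le.2 ⟨by linarith [hξ.1], by linarith [hξ.2]⟩)
          rw [hGx, hz _ p1, mul_zero, add_zero, norm_mul, Complex.norm_real,
            Real.norm_of_nonneg (by linarith [hξ.1]), ← mul_assoc A]
          have p3 : 2 ≤ A * (ξ + L) := by nlinarith [hξ.1]
          gcongr
      _ ≤ ∫ ξ, G ξ := setIntegral_le_integral hint (Eventually.of_forall hG0)
  · rw [← setIntegral_eq_integral_of_forall_compl_eq_zero (s := S) (fun ξ h => hout ξ h)]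
    have hv : volume.real S ≤ 4 := by
      refine (measureReal_union_le _ _).trans ?_
      rw [Real.volume_real_Icc_of_le (by linarith), Real.volume_real_Icc_of_le (by linarith)]
      linarith
    refine (le_abs_self _).trans ((norm_setIntegral_le_of_norm_le_const
      hSc.measure_lt_top hup).trans ?_)
    gcongr

/-- For any `s ∈ ℝ` there is `C = C(φ) > 0` such that
`liminf_{n→∞} ‖g_n ∂_x f_n‖_{H^s} ≥ C`. -/
theorem liminf_gn_deriv_fn (s : ℝ) (φhat : ℝ → ℝ) (φ : ℝ → ℂ) (hφ : CutoffPair φhat φ) :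
    ∃ C : ℝ, 0 < C ∧
      C ≤ Filter.liminf
        (fun n : ℕ => sobolevNorm s (fun x => gn φ n x * deriv (fn s φ n) x))
        Filter.atTop := by


  obtain ⟨hd, h1, h2⟩ := cutoff_facts hφ
  obtain ⟨c, D, hc, hcD⟩ := core_bound s (fourierT (fun x => φ x * φ x)) (fourierT_continuous h1)
    (fourierT_sq_zero hφ) _ (norm_fourierT_le _) (fourierT_sq_lower hφ)
  have key : ∀ n : ℕ, 1 ≤ n →
      Real.sqrt c ≤ sobolevNorm s (fun x => gn φ n x * deriv (fn s φ n) x) ∧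
      sobolevNorm s (fun x => gn φ n x * deriv (fn s φ n) x) ≤ Real.sqrt D := by
    intro n hn
    have hA : (2 : ℝ) ^ (-(n : ℝ)) = (2 ^ n)⁻¹ := by
      rw [Real.rpow_neg (by norm_num), Real.rpow_natCast]
    have h2n : (2 : ℝ) ≤ 2 ^ n := by
      calc (2 : ℝ) = 2 ^ 1 := by norm_num
        _ ≤ 2 ^ n := pow_le_pow_right₀ (by norm_num) hn
    obtain ⟨q1, q2⟩ := hcD ((2 : ℝ) ^ (-(n : ℝ))) (17 / 12 * 2 ^ n) (by positivity)
      (by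
        rw [hA, one_div]
        exact inv_anti₀ (by norm_num) h2n)
      (by
        rw [hA]
        field_simp)
    unfold sobolevNorm
    simp only [fourierT_main s hφ n _ rfl]
    rw [Real.rpow_mul (by norm_num)]
    exact ⟨Real.sqrt_le_sqrt q1, Real.sqrt_le_sqrt q2⟩
  refine ⟨Real.sqrt c, Real.sqrt_pos.2 hc, ?_⟩
  refine le_liminf_of_le ?_ ?_
  · refine IsBoundedUnder.isCoboundedUnder_ge ?_
    refine ⟨Real.sqrt D, ?_⟩
    rw [eventually_map]
    filter_upwards [eventually_ge_atTop 1] with n hn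
    exact (key n hn).2
  · filter_upwards [eventually_ge_atTop 1] with n hn
    exact (key n hn).1
end

section
/- Let s > 3/2. There exists a constant C (depending on φ and s but not on n) such that for every sufficiently large integer n, the functions f_n(x) = 2^{-ns} φ(x) sin((17/12)·2^n x), g_n(x) = 2^{-n} φ(x), and u_0^n = f_n + g_n satisfy ‖u_0^n ∂_x g_n‖_{H^s(ℝ)} ≤ C·2^{-n}. -/
open MeasureTheory Filter

open scoped FourierTransform SchwartzMap

lemma aux_fourierT_eq (f : ℝ → ℂ) (ξ : ℝ) : fourierT f (2 * Real.pi * ξ) = 𝓕 f ξ := by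
  rw [Real.fourier_real_eq_integral_exp_smul, fourierT]
  congr 1
  ext x
  rw [smul_eq_mul, mul_comm]
  congr 2
  push_cast
  ring

lemma aux_schwartz (φhat : ℝ → ℝ) (φ : ℝ → ℂ) (hφ : CutoffPair φhat φ) :
    ∃ Φ : 𝓢(ℝ, ℂ), ⇑Φ = φ := by
  have h1 : ContDiff ℝ (⊤ : ℕ∞) (fun ξ : ℝ => (φhat ξ : ℂ)) :=
    Complex.ofRealCLM.contDiff.comp hφ.smooth
  have h2 : HasCompactSupport (fun ξ : ℝ => (φhat ξ : ℂ)) :=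
    hφ.compactSupport.comp_left (g := fun x : ℝ => (x : ℂ)) (by simp)
  let P : 𝓢(ℝ, ℂ) := h2.toSchwartzMap h1
  have hpi : (2 * Real.pi) ≠ 0 := by positivity
  let Q : 𝓢(ℝ, ℂ) := SchwartzMap.compCLMOfContinuousLinearEquiv ℂ
    (ContinuousLinearEquiv.unitsEquivAut ℝ (Units.mk0 _ hpi)) P
  have hQ : ⇑Q = 𝓕 φ := by
    ext ξ
    rw [← aux_fourierT_eq, hφ.fourier_eq]
    simp [Q, P, mul_comm]
  refine ⟨𝓕⁻ Q, ?_⟩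
  rw [SchwartzMap.fourierInv_coe, hQ]
  apply hφ.continuous.fourierInv_fourier_eq hφ.integrable
  rw [← hQ]
  exact Q.integrable

lemma aux_ft_schwartz (h : 𝓢(ℝ, ℂ)) : ∃ H : 𝓢(ℝ, ℂ), ∀ ξ, H ξ = fourierT h ξ := by
  have hpi : (2 * Real.pi)⁻¹ ≠ 0 := by positivity
  refine ⟨SchwartzMap.compCLMOfContinuousLinearEquiv ℂ
    (ContinuousLinearEquiv.unitsEquivAut ℝ (Units.mk0 _ hpi)) (𝓕 h), fun ξ => ?_⟩
  have : ξ = 2 * Real.pi * (ξ * (2 * Real.pi)⁻¹) := by field_simp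
  conv_rhs => rw [this, aux_fourierT_eq]
  simp [SchwartzMap.fourier_coe]

lemma aux_W_integrable (s : ℝ) (H : 𝓢(ℝ, ℂ)) :
    Integrable (fun ξ : ℝ => (1 + ξ ^ 2) ^ s * ‖H ξ‖ ^ 2) := by
  have hg := Function.hasTemperateGrowth_one_add_norm_sq_rpow ℝ s
  let K : 𝓢(ℝ, ℂ) := SchwartzMap.smulLeftCLM ℂ (fun x : ℝ => (1 + ‖x‖ ^ 2) ^ s) H
  have := (SchwartzMap.pairing (ContinuousLinearMap.mul ℝ ℂ) K H).integrable (μ := volume)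
  refine this.norm.congr (ae_of_all _ fun ξ => ?_)
  have h0 : 0 ≤ (1 + ξ ^ 2) ^ s := by positivity
  have hK : K ξ = ((1 + ‖ξ‖ ^ 2) ^ s : ℝ) • H ξ := SchwartzMap.smulLeftCLM_apply_apply hg H ξ
  beta_reduce
  rw [SchwartzMap.pairing_apply_apply, ContinuousLinearMap.mul_apply', norm_mul, hK, norm_smul,
    Real.norm_eq_abs ξ, sq_abs, Real.norm_of_nonneg h0]
  ring

lemma aux_ft_shift (h : ℝ → ℂ) (hh : Integrable h) (a b l ξ : ℝ) :
    fourierT (fun x => ((a * Real.sin (l * x) + b : ℝ) : ℂ) * h x) ξ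
      = a * (Complex.I / 2) * (fourierT h (ξ + l) - fourierT h (ξ - l)) + b * fourierT h ξ := by
  have key : ∀ η : ℝ, Integrable (fun x : ℝ => h x * Complex.exp (-(Complex.I * x * η))) := by
    intro η
    refine hh.mul_bdd (c := 1) (by fun_prop) (ae_of_all _ fun x => ?_)
    rw [Complex.norm_exp]
    simp
  have key2 : Integrable (fun x : ℝ => (a * (Complex.I / 2)) *
      (h x * Complex.exp (-(Complex.I * x * ((ξ + l : ℝ) : ℂ)))
        - h x * Complex.exp (-(Complex.I * x * ((ξ - l : ℝ) : ℂ))))) :=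
    ((key _).sub (key _)).const_mul _
  unfold fourierT
  rw [← integral_sub (key _) (key _), ← integral_const_mul, ← integral_const_mul,
    ← integral_add key2 ((key _).const_mul _)]
  congr 1
  ext x
  have e1 : Complex.exp (-(Complex.I * x * ((ξ + l : ℝ) : ℂ)))
      = Complex.exp (-(Complex.I * x * ξ)) * Complex.exp (-(l * x) * Complex.I) := by
    rw [← Complex.exp_add]; congr 1; push_cast; ring
  have e2 : Complex.exp (-(Complex.I * x * ((ξ - l : ℝ) : ℂ)))
      = Complex.exp (-(Complex.I * x * ξ)) * Complex.exp ((l * x) * Complex.I) := by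
    rw [← Complex.exp_add]; congr 1; push_cast; ring
  rw [e1, e2]
  push_cast
  rw [Complex.sin]
  ring

lemma aux_peetre (s : ℝ) (hs : 0 ≤ s) (m ξ l : ℝ) (hm : 1 ≤ m) (hl : l ^ 2 ≤ 3 * m ^ 2) :
    (1 + ξ ^ 2) ^ s ≤ 8 ^ s * (m ^ s) ^ 2 * (1 + (ξ - l) ^ 2) ^ s := by
  have hm0 : 0 ≤ m := by linarith
  rw [← Real.rpow_natCast (m ^ s) 2, ← Real.rpow_mul hm0, mul_comm s, Real.rpow_mul hm0,
    ← Real.mul_rpow (by norm_num) (by positivity), ← Real.mul_rpow (by positivity) (by positivity)]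
  apply Real.rpow_le_rpow (by positivity) _ hs
  have h4 : 1 + l ^ 2 ≤ 4 * m ^ 2 := by nlinarith
  have h1 : 1 + ξ ^ 2 ≤ 2 * (1 + l ^ 2) * (1 + (ξ - l) ^ 2) := by
    nlinarith [sq_nonneg (ξ - 2 * l), sq_nonneg (l * (ξ - l))]
  have h5 : (1 + l ^ 2) * (1 + (ξ - l) ^ 2) ≤ 4 * m ^ 2 * (1 + (ξ - l) ^ 2) := by gcongr
  norm_num
  linarith

/-- For `s > 3/2` there is `C` (independent of `n`) such that, with `u_0^n = f_n + g_n`,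
`‖u_0^n ∂_x g_n‖_{H^s} ≤ C·2^{-n}` for all sufficiently large `n`. -/
theorem u0n_deriv_gn_bound (s : ℝ) (hs : 3 / 2 < s) (φhat : ℝ → ℝ) (φ : ℝ → ℂ)
    (hφ : CutoffPair φhat φ) :
    ∃ C : ℝ, 0 < C ∧ ∃ N : ℕ, ∀ n : ℕ, N ≤ n →
      sobolevNorm s (fun x => (fn s φ n x + gn φ n x) * deriv (gn φ n) x)
        ≤ C * (2 : ℝ) ^ (-(n : ℝ)) := by
  obtain ⟨Φ, rfl⟩ := aux_schwartz φhat φ hφ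
  let h : 𝓢(ℝ, ℂ) := SchwartzMap.pairing (ContinuousLinearMap.mul ℝ ℂ) Φ
    (SchwartzMap.derivCLM ℝ ℂ Φ)
  have hh : ∀ x, h x = Φ x * deriv Φ x := fun x => by simp [h]
  obtain ⟨H, hH⟩ := aux_ft_schwartz h
  set W : ℝ → ℝ := fun ξ => (1 + ξ ^ 2) ^ s * ‖H ξ‖ ^ 2 with hW
  have hWi : Integrable W := aux_W_integrable s H
  have hW0 : ∀ ξ, 0 ≤ W ξ := fun ξ => by positivity
  set J := ∫ ξ, W ξ with hJ
  have hJ0 : 0 ≤ J := integral_nonneg hW0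
  refine ⟨Real.sqrt (3 * (2 * 8 ^ s + 1) * J) + 1, by positivity, 0, fun n _ => ?_⟩
  set m : ℝ := 2 ^ n with hm
  have hm1 : 1 ≤ m := one_le_pow₀ (by norm_num)
  have hm0 : 0 < m := by linarith
  have p1 : (2 : ℝ) ^ (-(n : ℝ)) = m⁻¹ := by
    rw [Real.rpow_neg (by norm_num), Real.rpow_natCast]
  have p2 : (2 : ℝ) ^ (-(n : ℝ) * s) = (m ^ s)⁻¹ := by
    rw [Real.rpow_mul (by norm_num), p1, Real.inv_rpow hm0.le]
  set l : ℝ := 17 / 12 * m with hl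
  have hl2 : l ^ 2 ≤ 3 * m ^ 2 := by rw [hl]; nlinarith [sq_nonneg m]
  have hfun : (fun x => (fn s Φ n x + gn Φ n x) * deriv (gn Φ n) x)
      = fun x => ((m⁻¹ * (m ^ s)⁻¹ * Real.sin (l * x) + m⁻¹ * m⁻¹ : ℝ) : ℂ) * h x := by
    ext x
    have : deriv (gn Φ n) x = ((m⁻¹ : ℝ) : ℂ) * deriv Φ x := by
      unfold gn
      rw [p1, deriv_const_mul _ Φ.differentiableAt]
    rw [this, hh]
    simp only [fn, gn, p1, p2, ← hm, ← hl]
    push_cast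
    ring
  rw [hfun, sobolevNorm, p1]
  have hms : 0 < m ^ s := by positivity
  have hpt : ∀ ξ : ℝ, (1 + ξ ^ 2) ^ s * ‖fourierT (fun x => ((m⁻¹ * (m ^ s)⁻¹ * Real.sin (l * x)
      + m⁻¹ * m⁻¹ : ℝ) : ℂ) * h x) ξ‖ ^ 2
      ≤ 3 * m⁻¹ ^ 2 * (8 ^ s * (W (ξ + l) + W (ξ - l)) + W ξ) := by
    intro ξ
    rw [aux_ft_shift h h.integrable, ← hH, ← hH, ← hH]
    have q1 := aux_peetre s (by linarith) m ξ l hm1 hl2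
    have q2 := aux_peetre s (by linarith) m ξ (-l) hm1 (by simpa using hl2)
    rw [sub_neg_eq_add] at q2
    have hn : ‖((m⁻¹ * (m ^ s)⁻¹ : ℝ) : ℂ) * (Complex.I / 2) * (H (ξ + l) - H (ξ - l))
        + ((m⁻¹ * m⁻¹ : ℝ) : ℂ) * H ξ‖ ≤
        m⁻¹ * ((m ^ s)⁻¹ * ‖H (ξ + l)‖ + (m ^ s)⁻¹ * ‖H (ξ - l)‖ + ‖H ξ‖) := by
      refine (norm_add_le _ _).trans ?_
      rw [norm_mul, norm_mul, norm_mul, Complex.norm_real, Complex.norm_real,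
        Real.norm_of_nonneg (by positivity), Real.norm_of_nonneg (by positivity)]
      have i1 : ‖Complex.I / 2‖ ≤ 1 := by simp; norm_num
      have i2 : m⁻¹ ≤ 1 := inv_le_one_of_one_le₀ hm1
      calc _ ≤ m⁻¹ * (m ^ s)⁻¹ * 1 * (‖H (ξ + l)‖ + ‖H (ξ - l)‖) + m⁻¹ * 1 * ‖H ξ‖ := by
            gcongr
            exact norm_sub_le _ _
        _ = _ := by ring
    have h3 : ∀ a b c : ℝ, (a + b + c) ^ 2 ≤ 3 * (a ^ 2 + b ^ 2 + c ^ 2) := fun a b c => by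
      nlinarith [sq_nonneg (a - b), sq_nonneg (b - c), sq_nonneg (a - c)]
    have r : ∀ η, (1 + ξ ^ 2) ^ s ≤ 8 ^ s * (m ^ s) ^ 2 * (1 + η ^ 2) ^ s →
        (1 + ξ ^ 2) ^ s * ((m ^ s)⁻¹ * ‖H η‖) ^ 2 ≤ 8 ^ s * W η := by
      intro η q
      calc _ ≤ (8 ^ s * (m ^ s) ^ 2 * (1 + η ^ 2) ^ s) * ((m ^ s)⁻¹ * ‖H η‖) ^ 2 := by gcongr
        _ = _ := by simp only [hW]; field_simp
    calc _ ≤ (1 + ξ ^ 2) ^ s *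
          (m⁻¹ * ((m ^ s)⁻¹ * ‖H (ξ + l)‖ + (m ^ s)⁻¹ * ‖H (ξ - l)‖ + ‖H ξ‖)) ^ 2 := by gcongr
      _ ≤ (1 + ξ ^ 2) ^ s * (m⁻¹ ^ 2 * (3 * (((m ^ s)⁻¹ * ‖H (ξ + l)‖) ^ 2
          + ((m ^ s)⁻¹ * ‖H (ξ - l)‖) ^ 2 + ‖H ξ‖ ^ 2))) := by
        rw [mul_pow]
        gcongr
        exact h3 _ _ _
      _ = 3 * m⁻¹ ^ 2 * ((1 + ξ ^ 2) ^ s * ((m ^ s)⁻¹ * ‖H (ξ + l)‖) ^ 2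
          + (1 + ξ ^ 2) ^ s * ((m ^ s)⁻¹ * ‖H (ξ - l)‖) ^ 2 + W ξ) := by simp only [hW]; ring
      _ ≤ 3 * m⁻¹ ^ 2 * (8 ^ s * W (ξ + l) + 8 ^ s * W (ξ - l) + W ξ) := by
        exact mul_le_mul_of_nonneg_left (add_le_add (add_le_add (r _ q2) (r _ q1)) le_rfl)
          (by positivity)
      _ = _ := by ring
  have ia : Integrable (fun ξ => W (ξ + l)) := hWi.comp_add_right l
  have ib : Integrable (fun ξ => W (ξ - l)) := hWi.comp_sub_right l
  have iab : Integrable (fun ξ => 8 ^ s * (W (ξ + l) + W (ξ - l))) := (ia.add ib).const_mul _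
  have hle := integral_mono_of_nonneg (μ := volume) (ae_of_all _ fun ξ => by positivity)
    ((iab.add hWi).const_mul (3 * m⁻¹ ^ 2)) (ae_of_all _ hpt)
  have hval : ∫ ξ, 3 * m⁻¹ ^ 2 * (8 ^ s * (W (ξ + l) + W (ξ - l)) + W ξ)
      = 3 * (2 * 8 ^ s + 1) * J * m⁻¹ ^ 2 := by
    rw [integral_const_mul, integral_add iab hWi, integral_const_mul, integral_add ia ib,
      integral_add_right_eq_self, integral_sub_right_eq_self]
    ring
  have hle2 := hle.trans hval.le
  refine (Real.sqrt_le_sqrt hle2).trans ?_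
  rw [Real.sqrt_mul (by positivity), Real.sqrt_sq (by positivity)]
  have : 0 < m⁻¹ := by positivity
  nlinarith
end
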